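/- Adding a parallel edge into a strongly connected component preserves the E-separation model: let G = (V, E_d) be a directed graph, i, j ∈ V with i ≠ j, (i, j) ∉ E_d, i ∉ scc_G(j), and suppose there exists j′ ∈ scc_G(j) with (i, j′) ∈ E_d; let G′ = (V, E_d ∪ {(i, j)}). Then I_E^G = I_E^{G′}. -/

import Mathlib

namespace ESepPaper

/-- A directed mixed graph: directed edges and bidirected edges over a node type `V`.
A directed graph (DG) is a DMG with `Ebi = ∅`. -/
structure DMG (V : Type) where
  Ed : Set (V × V)
  Ebi : Set (Sym2 V)

variable {V : Type}

/-- `G.ancestor u v` : there is a directed path `u → … → v` (possibly trivial). -/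
def DMG.ancestor (G : DMG V) : V → V → Prop :=
  Relation.ReflTransGen (fun u v => (u, v) ∈ G.Ed)

/-- Ancestors of a set `C`. -/
def DMG.anc (G : DMG V) (C : Set V) : Set V := {u | ∃ v ∈ C, G.ancestor u v}

/-- Strongly connected component of `v`. -/
def DMG.scc (G : DMG V) (v : V) : Set V := {w | G.ancestor w v ∧ G.ancestor v w}

/-- Parents of a set of nodes. -/
def DMG.pa (G : DMG V) (S : Set V) : Set V := {w | ∃ v ∈ S, (w, v) ∈ G.Ed}

/-- Kind of a traversed edge on a walk: forward directed, backward directed, or bidirected. -/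
inductive LinkType | fwd | bwd | bi
deriving DecidableEq

/-- Validity of a link of kind `t` between consecutive walk nodes `u` and `v`. -/
def DMG.linkOK (G : DMG V) (u v : V) : LinkType → Prop
  | .fwd => (u, v) ∈ G.Ed
  | .bwd => (v, u) ∈ G.Ed
  | .bi => s(u, v) ∈ G.Ebi

/-- Arrowhead at the second (right) endpoint of the link. -/
def LinkType.headR : LinkType → Prop
  | .fwd => True
  | .bwd => False
  | .bi => True

/-- Arrowhead at the first (left) endpoint of the link. -/
def LinkType.headL : LinkType → Prop
  | .fwd => False
  | .bwd => True
  | .bi => True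

/-- Tail at the second (right) endpoint. -/
def LinkType.tailR (t : LinkType) : Prop := t = .bwd

/-- Tail at the first (left) endpoint. -/
def LinkType.tailL (t : LinkType) : Prop := t = .fwd

/-- Walks in a DMG. -/
inductive DMG.Walk (G : DMG V) : V → V → Type
  | nil (v : V) : DMG.Walk G v v
  | cons {u v w : V} (t : LinkType) (h : G.linkOK u v t) (p : DMG.Walk G v w) : DMG.Walk G u w

/-- An interior node on a walk, whose incoming link is `t1` and outgoing link is `t2`,
is a collider iff both links have an arrowhead at it. -/
def colliderAt (t1 t2 : LinkType) : Prop := t1.headR ∧ t2.headL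

/-- An interior non-collider `v` between neighbours `u` (incoming link `t1`) and `w`
(outgoing link `t2`) is unblockable: on every side where the link has a tail at `v`, the
corresponding neighbour lies in `scc_G(v)` (left-chain/right-chain/fork cases). -/
def unblockableAt (G : DMG V) (u v w : V) (t1 t2 : LinkType) : Prop :=
  (t1.tailR → u ∈ G.scc v) ∧ (t2.tailL → w ∈ G.scc v)

namespace DMG.Walk

variable {G : DMG V}

/-- First node of a walk. -/
def first {a b : V} (_ : G.Walk a b) : V := a

def length : {a b : V} → G.Walk a b → ℕ
  | _, _, .nil _ => 0
  | _, _, .cons _ _ p => p.length + 1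

def support : {a b : V} → G.Walk a b → List V
  | a, _, .nil _ => [a]
  | a, _, .cons _ _ p => a :: p.support

/-- Auxiliary: σ-openness of the remainder of a walk, where `u` is the previous node and
`t1` the link from `u` into the current first node. -/
def sigmaOpenAux (C : Set V) : (u : V) → LinkType → {b c : V} → G.Walk b c → Prop
  | _, _, _, _, .nil _ => True
  | u, t1, v, _, .cons t2 _ q =>
      ((colliderAt t1 t2 → v ∈ G.anc C) ∧
       (¬ colliderAt t1 t2 → ¬ unblockableAt G u v q.first t1 t2 → v ∉ C)) ∧
      sigmaOpenAux C v t2 q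

/-- The walk is σ-open given `C`: every collider on it is an ancestor of a node of `C`, and
no blockable non-collider on it lies in `C`. -/
def sigmaOpen (C : Set V) : {a b : V} → G.Walk a b → Prop
  | _, _, .nil _ => True
  | a, _, .cons t _ q => sigmaOpenAux C a t q

/-- All links are forward directed. -/
def IsDirected : {a b : V} → G.Walk a b → Prop
  | _, _, .nil _ => True
  | _, _, .cons t _ p => t = .fwd ∧ p.IsDirected

/-- Interior nodes of the walk (all nodes except the two endpoints). -/
def interior {a b : V} (p : G.Walk a b) : List V := p.support.tail.dropLast

/-- Arrowhead at the first endpoint. -/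
def headAtStart : {a b : V} → G.Walk a b → Prop
  | _, _, .nil _ => False
  | _, _, .cons t _ _ => t.headL

def headAtEndAux : LinkType → {a b : V} → G.Walk a b → Prop
  | t, _, _, .nil _ => t.headR
  | _, _, _, .cons t _ q => headAtEndAux t q

/-- Arrowhead at the last endpoint. -/
def headAtEnd : {a b : V} → G.Walk a b → Prop
  | _, _, .nil _ => False
  | _, _, .cons t _ q => headAtEndAux t q

def noCollidersAux : LinkType → {a b : V} → G.Walk a b → Prop
  | _, _, _, .nil _ => True
  | t1, _, _, .cons t2 _ q => ¬ colliderAt t1 t2 ∧ noCollidersAux t2 q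

/-- There is no collider on the walk. -/
def NoColliders : {a b : V} → G.Walk a b → Prop
  | _, _, .nil _ => True
  | _, _, .cons t _ q => noCollidersAux t q

def collidersInAux (S : Set V) : LinkType → {a b : V} → G.Walk a b → Prop
  | _, _, _, .nil _ => True
  | t1, v, _, .cons t2 _ q => (colliderAt t1 t2 → v ∈ S) ∧ collidersInAux S t2 q

/-- Every collider on the walk lies in `S`. -/
def CollidersIn (S : Set V) : {a b : V} → G.Walk a b → Prop
  | _, _, .nil _ => True
  | _, _, .cons t _ q => collidersInAux S t q

def noncollUnblAux : (u : V) → LinkType → {b c : V} → G.Walk b c → Prop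
  | _, _, _, _, .nil _ => True
  | u, t1, v, _, .cons t2 _ q =>
      (¬ colliderAt t1 t2 → unblockableAt G u v q.first t1 t2) ∧ noncollUnblAux v t2 q

/-- Every interior non-collider on the walk is unblockable. -/
def NoncollidersUnblockable : {a b : V} → G.Walk a b → Prop
  | _, _, .nil _ => True
  | a, _, .cons t _ q => noncollUnblAux a t q

/-- The set of edges occurring on a walk (directed edges as ordered pairs in `E_d`,
bidirected edges as unordered pairs). -/
def edges : {a b : V} → G.Walk a b → Set ((V × V) ⊕ Sym2 V)
  | _, _, .nil _ => ∅
  | a, _, .cons t _ p =>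
      insert (match t with
        | .fwd => Sum.inl (a, p.first)
        | .bwd => Sum.inl (p.first, a)
        | .bi => Sum.inr s(a, p.first)) p.edges

/-- Concatenation of walks. -/
def append : {a b c : V} → G.Walk a b → G.Walk b c → G.Walk a c
  | _, _, _, .nil _, q => q
  | _, _, _, .cons t h p, q => .cons t h (p.append q)

/-- A walk `v_0, …, v_{n+1}` is a path if no node besides the final endpoint occurs more
than once, i.e. `v_0, …, v_n` are pairwise distinct. -/
def IsPath {a b : V} (p : G.Walk a b) : Prop := p.support.dropLast.Nodup

end DMG.Walk

/-- `A` is σ-separated from `B` given `C` in `G`: every walk from a node of `A` to a node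
of `B` is σ-blocked given `C`. -/
def DMG.sigmaSep (G : DMG V) (A B C : Set V) : Prop :=
  ∀ a ∈ A, ∀ b ∈ B, ∀ p : G.Walk a b, ¬ p.sigmaOpen C

/-- The lifted dependency graph of `G`, on two copies of `V`
(`Sum.inl` is the past copy `V_0`, `Sum.inr` the future copy `V_1`). -/
def DMG.lift (G : DMG V) : DMG (V ⊕ V) where
  Ed := {e | ∃ u v, (u, v) ∈ G.Ed ∧
        (e = (Sum.inl u, Sum.inl v) ∨ e = (Sum.inl u, Sum.inr v) ∨
         e = (Sum.inr u, Sum.inr v))}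
  Ebi := {e | ∃ u v, s(u, v) ∈ G.Ebi ∧
        (e = s(Sum.inl u, Sum.inl v) ∨ e = s(Sum.inl u, Sum.inr v) ∨
         e = s(Sum.inr u, Sum.inl v) ∨ e = s(Sum.inr u, Sum.inr v))}

/-- `B` is E-separated from `A` given `C` in `G`:
`A_0` is σ-separated from `B_1` given `C_0 ∪ (C_1 \ B_1)` in the lifted dependency graph. -/
def DMG.ESep (G : DMG V) (A B C : Set V) : Prop :=
  G.lift.sigmaSep (Sum.inl '' A) (Sum.inr '' B)
    ((Sum.inl '' C) ∪ ((Sum.inr '' C) \ (Sum.inr '' B)))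

/-- The independence model `I_E^G` of E-separation triples. -/
def DMG.IE (G : DMG V) : Set (Set V × Set V × Set V) :=
  {t | G.ESep t.1 t.2.1 t.2.2}


/-- The latent projection of `G` onto the observed nodes `O`: a directed edge when there is
a non-trivial directed walk whose interior nodes are all latent, and a bidirected edge when
there is a non-trivial collider-free walk with arrowheads at both endpoints whose interior
nodes are all latent. -/
def DMG.latentProj (G : DMG V) (O : Set V) : DMG O where
  Ed := {e | ∃ p : G.Walk e.1.val e.2.val,
          p.IsDirected ∧ 0 < p.length ∧ ∀ x ∈ p.interior, x ∉ O}
  Ebi := {e | ∃ u v : O, e = s(u, v) ∧ ∃ p : G.Walk u.val v.val,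
          p.headAtStart ∧ p.headAtEnd ∧ p.NoColliders ∧ 0 < p.length ∧
          ∀ x ∈ p.interior, x ∉ O}

/-- The last edge of the walk `p` before entering `scc_G(w)` has an arrowhead at its
endpoint in `scc_G(w)` (vacuous if the walk never leaves `scc_G(w)`). -/
def DMG.lastEdgeInto (G : DMG V) {a b : V} (w : V) (p : G.Walk a b) : Prop :=
  (∀ x ∈ p.support, x ∈ G.scc w) ∨
  ∃ (x y : V) (t : LinkType) (h : G.linkOK x y t) (p₁ : G.Walk a x) (p₂ : G.Walk y b),
    p = p₁.append (.cons t h p₂) ∧ x ∉ G.scc w ∧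
    (∀ z ∈ p₂.support, z ∈ G.scc w) ∧ t.headR

/-- An (asymmetric) inducing path from `v` to `w`: a non-trivial path such that every
collider on it is an ancestor of `v` or `w`, every interior non-collider is unblockable,
and the last edge before entering `scc_G(w)` points into `scc_G(w)`. -/
def DMG.IsInducingPath (G : DMG V) {v w : V} (p : G.Walk v w) : Prop :=
  0 < p.length ∧ p.IsPath ∧
  p.CollidersIn (G.anc {v, w}) ∧ p.NoncollidersUnblockable ∧ G.lastEdgeInto w p

/-!
Compare two graphs `K`, `L` such that every edge `x → y` of `K` is matched by an edge `x → y'` of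
`L` with `y'` in the strongly connected component of `y`. In a σ-open walk of `K`, replace each
step `x → y` by `x → y' → ⋯ → y`, the detour staying inside that component. Every added node is a
non-collider whose outgoing tail stays in its own component, hence unblockable, while the arrowhead
at `y` and the component of the node after `x` are unchanged. So the new walk is σ-open in `L`, and
σ-separation in `L` implies σ-separation in `K`. The comparison passes to lifted dependency graphs,
and it holds in both directions between a graph and its extension by a parallel edge.
-/

theorem not_colliderAt_fwd_right {t : LinkType} : ¬ colliderAt t .fwd := And.right

theorem not_colliderAt_bwd_left {t : LinkType} : ¬ colliderAt .bwd t := And.left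

namespace DMG

variable {G K L : DMG V} {C : Set V} {b c u u' v w w' x y z : V} {t t₁ t₂ : LinkType}

theorem mem_scc_self (v : V) : v ∈ G.scc v := ⟨.refl, .refl⟩

theorem mem_scc_trans (huv : u ∈ G.scc v) (hvw : v ∈ G.scc w) : u ∈ G.scc w :=
  ⟨huv.1.trans hvw.1, hvw.2.trans huv.2⟩

/-- `K` is dominated by `L` up to parallel edges: an edge `x → y` of `K` need not be an edge of
`L`, but some `x → y'` with `y'` in the strongly connected component of `y` is. Mutual
domination makes the E-separation models of two graphs equal. -/
structure ParallelLE (K L : DMG V) : Prop where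
  directed : ∀ ⦃x y⦄, (x, y) ∈ K.Ed → ∃ y' ∈ L.scc y, (x, y') ∈ L.Ed
  bidirected : K.Ebi ⊆ L.Ebi

theorem ParallelLE.of_subset (hd : K.Ed ⊆ L.Ed) (hbi : K.Ebi ⊆ L.Ebi) : K.ParallelLE L where
  directed _ y hxy := ⟨y, mem_scc_self y, hd hxy⟩
  bidirected := hbi

theorem ParallelLE.ancestor (h : K.ParallelLE L) (huv : K.ancestor u v) : L.ancestor u v := by
  induction huv with
  | refl => exact .refl
  | tail _ hxy ih =>
    obtain ⟨y', hy', hxy'⟩ := h.directed hxy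
    exact (ih.tail hxy').trans hy'.1

theorem ParallelLE.anc_subset (h : K.ParallelLE L) (C : Set V) : K.anc C ⊆ L.anc C :=
  fun _ ⟨c, hc, huc⟩ => ⟨c, hc, h.ancestor huc⟩

theorem ParallelLE.scc_subset (h : K.ParallelLE L) (v : V) : K.scc v ⊆ L.scc v :=
  fun _ hw => ⟨h.ancestor hw.1, h.ancestor hw.2⟩

namespace Walk

theorem sigmaOpenAux.change_prev {q : G.Walk v c} (hq : q.sigmaOpenAux C u t)
    (hu : t.tailR → u ∈ G.scc v → u' ∈ G.scc v) : q.sigmaOpenAux C u' t := by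
  cases q with
  | nil => trivial
  | cons =>
    obtain ⟨⟨hcol, hnoncol⟩, htail⟩ := hq
    exact ⟨⟨hcol, fun hc hub => hnoncol hc fun hub' =>
      hub ⟨fun ht => hu ht (hub'.1 ht), hub'.2⟩⟩, htail⟩

theorem sigmaOpenAux.cons_of_unblockable {q : G.Walk w c} (hq : q.sigmaOpenAux C v t₂)
    (hcol : ¬ colliderAt t₁ t₂) (hub : unblockableAt G u v w t₁ t₂) (hvw : G.linkOK v w t₂) :
    (cons t₂ hvw q).sigmaOpenAux C u t₁ :=
  ⟨⟨fun hc => absurd hc hcol, fun _ hblock => absurd hub hblock⟩, hq⟩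

theorem exists_sigmaOpenAux_fwd_of_mem_scc (hy : y ∈ G.scc v) (q : G.Walk v c)
    (hq : q.sigmaOpenAux C u .fwd) : ∃ q' : G.Walk y c, q'.sigmaOpenAux C u .fwd := by
  obtain ⟨hyv, hvy⟩ := hy
  induction hyv using Relation.ReflTransGen.head_induction_on with
  | refl => exact ⟨q, hq⟩
  | @head y z hyz hzv ih =>
    obtain ⟨q', hq'⟩ := ih (hvy.tail hyz)
    have hq'_from_y : q'.sigmaOpenAux C y .fwd := hq'.change_prev fun ht => nomatch ht
    have hz : z ∈ G.scc y := ⟨hzv.trans hvy, .single hyz⟩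
    have hub : unblockableAt G u y z .fwd .fwd := ⟨nofun, fun _ => hz⟩
    exact ⟨cons .fwd hyz q',
      hq'_from_y.cons_of_unblockable not_colliderAt_fwd_right hub hyz⟩

theorem exists_sigmaOpenAux_bwd_of_mem_scc (hy : y ∈ G.scc z) (hxy : (x, y) ∈ G.Ed)
    (q : G.Walk x c) (hq : q.sigmaOpenAux C y .bwd) :
    ∃ v, G.linkOK z v .bwd ∧ ∃ q' : G.Walk v c, q'.sigmaOpenAux C z .bwd := by
  obtain ⟨hyz, hzy⟩ := hy
  induction hyz with
  | refl => exact ⟨x, hxy, q, hq⟩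
  | @tail z w hyz hzw ih =>
    obtain ⟨v, hzv, q', hq'⟩ := ih (hzy.head hzw)
    have hw : w ∈ G.scc z := ⟨hzy.trans hyz, .single hzw⟩
    have hub : unblockableAt G w z v .bwd .bwd := ⟨fun _ => hw, nofun⟩
    exact ⟨z, hzw, cons .bwd hzv q',
      hq'.cons_of_unblockable not_colliderAt_bwd_left hub hzv⟩

end Walk

theorem ParallelLE.unblockableAt (h : K.ParallelLE L) (hub : unblockableAt K u v w t₁ t₂)
    (hw : t₂.tailL → w' ∈ L.scc w) : unblockableAt L u v w' t₁ t₂ :=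
  ⟨fun ht => h.scc_subset v (hub.1 ht), fun ht => mem_scc_trans (hw ht) (h.scc_subset v (hub.2 ht))⟩

theorem ParallelLE.exists_linkOK_sigmaOpenAux (h : K.ParallelLE L) (hbv : K.linkOK b v t)
    (q : L.Walk v c) (hq : q.sigmaOpenAux C b t) :
    ∃ v', L.linkOK b v' t ∧ (t.tailL → v' ∈ L.scc v) ∧
      ∃ q' : L.Walk v' c, q'.sigmaOpenAux C b t := by
  cases t with
  | bi => exact ⟨v, h.bidirected hbv, nofun, q, hq⟩
  | fwd =>
    obtain ⟨y, hy, hby⟩ := h.directed hbv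
    exact ⟨y, hby, fun _ => hy, Walk.exists_sigmaOpenAux_fwd_of_mem_scc hy q hq⟩
  | bwd =>
    obtain ⟨y, hy, hvy⟩ := h.directed hbv
    have hq_y := hq.change_prev (u' := y) fun _ hb => mem_scc_trans hy hb
    obtain ⟨v', hbv', hopen⟩ := Walk.exists_sigmaOpenAux_bwd_of_mem_scc hy hvy q hq_y
    exact ⟨v', hbv', nofun, hopen⟩

theorem ParallelLE.exists_sigmaOpenAux (h : K.ParallelLE L) (q : K.Walk b c)
    (hq : q.sigmaOpenAux C u t) : ∃ q' : L.Walk b c, q'.sigmaOpenAux C u t := by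
  induction q generalizing u t with
  | nil => exact ⟨.nil _, trivial⟩
  | cons t₂ hbv q ih =>
    obtain ⟨⟨hcol, hnoncol⟩, htail⟩ := hq
    obtain ⟨q₁, hq₁⟩ := ih htail
    obtain ⟨v', hbv', hv', q₂, hq₂⟩ := h.exists_linkOK_sigmaOpenAux hbv q₁ hq₁
    exact ⟨.cons t₂ hbv' q₂, ⟨fun hc => h.anc_subset C (hcol hc), fun hc hblock =>
      hnoncol hc fun hub => hblock (h.unblockableAt hub hv')⟩, hq₂⟩

theorem ParallelLE.exists_sigmaOpen (h : K.ParallelLE L) (p : K.Walk b c) (hp : p.sigmaOpen C) :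
    ∃ p' : L.Walk b c, p'.sigmaOpen C := by
  cases p with
  | nil => exact ⟨.nil _, trivial⟩
  | cons t hbv q =>
    obtain ⟨q₁, hq₁⟩ := h.exists_sigmaOpenAux q hp
    obtain ⟨_, hbv', -, q₂, hq₂⟩ := h.exists_linkOK_sigmaOpenAux hbv q₁ hq₁
    exact ⟨.cons t hbv' q₂, hq₂⟩

theorem ParallelLE.sigmaSep {A B : Set V} (h : K.ParallelLE L) (hL : L.sigmaSep A B C) :
    K.sigmaSep A B C := by
  intro a ha b hb p hp
  obtain ⟨p', hp'⟩ := h.exists_sigmaOpen p hp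
  exact hL a ha b hb p' hp'

theorem lift_ancestor_inl (h : G.ancestor u v) : G.lift.ancestor (.inl u) (.inl v) :=
  Relation.ReflTransGen.lift (p := fun x y => (x, y) ∈ G.lift.Ed) Sum.inl
    (fun x y hxy => ⟨x, y, hxy, .inl rfl⟩) u v h

theorem lift_ancestor_inr (h : G.ancestor u v) : G.lift.ancestor (.inr u) (.inr v) :=
  Relation.ReflTransGen.lift (p := fun x y => (x, y) ∈ G.lift.Ed) Sum.inr
    (fun x y hxy => ⟨x, y, hxy, .inr (.inr rfl)⟩) u v h

theorem inl_mem_scc_lift (h : u ∈ G.scc v) : Sum.inl u ∈ G.lift.scc (.inl v) :=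
  ⟨lift_ancestor_inl h.1, lift_ancestor_inl h.2⟩

theorem inr_mem_scc_lift (h : u ∈ G.scc v) : Sum.inr u ∈ G.lift.scc (.inr v) :=
  ⟨lift_ancestor_inr h.1, lift_ancestor_inr h.2⟩

theorem ParallelLE.lift (h : K.ParallelLE L) : K.lift.ParallelLE L.lift where
  directed := by
    rintro _ _ ⟨u, v, huv, hcopy⟩
    obtain ⟨v', hv', huv'⟩ := h.directed huv
    obtain ⟨⟨⟩⟩ | ⟨⟨⟩⟩ | ⟨⟨⟩⟩ := hcopy
    · exact ⟨.inl v', inl_mem_scc_lift hv', u, v', huv', .inl rfl⟩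
    · exact ⟨.inr v', inr_mem_scc_lift hv', u, v', huv', .inr (.inl rfl)⟩
    · exact ⟨.inr v', inr_mem_scc_lift hv', u, v', huv', .inr (.inr rfl)⟩
  bidirected := fun _ ⟨u, v, huv, hcopy⟩ => ⟨u, v, h.bidirected huv, hcopy⟩

theorem ParallelLE.IE_subset (h : K.ParallelLE L) : L.IE ⊆ K.IE :=
  fun _ hL => h.lift.sigmaSep hL

theorem parallelLE_insert (e : V × V) : G.ParallelLE ⟨insert e G.Ed, G.Ebi⟩ :=
  .of_subset (Set.subset_insert _ _) subset_rfl

theorem insert_parallelLE (h : ∃ y' ∈ G.scc y, (x, y') ∈ G.Ed) :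
    ParallelLE ⟨insert (x, y) G.Ed, G.Ebi⟩ G where
  directed := by
    rintro u v (⟨⟨⟩⟩ | huv)
    · exact h
    · exact ⟨v, mem_scc_self v, huv⟩
  bidirected := subset_rfl

end DMG

theorem add_parallel_edge_general {V : Type} (G : DMG V) (i j : V)
    (hpar : ∃ j' ∈ G.scc j, (i, j') ∈ G.Ed) :
    G.IE = (DMG.mk (insert (i, j) G.Ed) G.Ebi).IE :=
  (DMG.insert_parallelLE hpar).IE_subset.antisymm (DMG.parallelLE_insert (i, j)).IE_subset

/-- Adding a parallel directed edge into a strongly connected component that `i` already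
points into preserves the E-separation independence model. -/
theorem add_parallel_edge {V : Type} [Fintype V] (G : DMG V) (hG : G.Ebi = ∅)
    (i j : V) (hij : i ≠ j) (hE : (i, j) ∉ G.Ed) (hscc : i ∉ G.scc j)
    (hpar : ∃ j' ∈ G.scc j, (i, j') ∈ G.Ed) :
    G.IE = (DMG.mk (insert (i, j) G.Ed) G.Ebi).IE :=
  add_parallel_edge_general G i j hpar

end ESepPaper
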